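/- (Structure of complete arc-eager transition sequences.) Let t be any complete arc-eager transition sequence for a sentence of length n ≥ 1. Then: (i) t consists of exactly 2n+1 transitions, of which exactly n+1 are pushes (sh or ra) and exactly n are pops (rl or re); (ii) the first transition of t is sh, pushing ROOT (index 0); (iii) each index in {0,…,n} is pushed exactly once, each index in {1,…,n} is popped exactly once, and index 0 is never popped; (iv) every index pushed by sh other than 0 is popped by rl and thereby receives a head strictly to its right, and every index pushed by ra is popped by re and received (at its push) a head strictly to its left; (v) the final arc set A(t) contains exactly n arcs and assigns to each index in {1,…,n} exactly one head. -/

import Mathlib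

/-- A parser configuration: a stack of indices (head of the list = top of stack),
a buffer of indices (head of the list = front of buffer), and a set of arcs
`(h, m)` meaning `h` is the head of modifier `m`. -/
structure Config where
  stack : List ℕ
  buffer : List ℕ
  arcs : Finset (ℕ × ℕ)

/-- Initial configuration for a sentence of length `n`:
empty stack, buffer `[0, 1, …, n]` (ROOT is index 0), empty arc set. -/
def initConfig (n : ℕ) : Config := ⟨[], List.range (n + 1), ∅⟩

/-- Stack-top feature of a configuration: `none` plays the role of the dummy index ⊥
used when the stack is empty. -/
def stackFeat (c : Config) : Option ℕ := c.stack.head?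

/-- Buffer-front feature of a configuration: the end-marker index `n + 1`
when the buffer is empty. -/
def bufFeat (n : ℕ) (c : Config) : ℕ := c.buffer.headD (n + 1)

/-- Arc-eager transition labels. -/
inductive ETrans
  | sh | rl | ra | re
deriving DecidableEq

/-- Single arc-eager transitions between configurations. -/
inductive EStep : Config → ETrans → Config → Prop
  | sh (σ b β A) : EStep ⟨σ, b :: β, A⟩ .sh ⟨b :: σ, β, A⟩
  | rl (s σ b β A) (h : ∀ x, (x, s) ∉ A) :
      EStep ⟨s :: σ, b :: β, A⟩ .rl ⟨σ, b :: β, insert (b, s) A⟩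
  | ra (s σ b β A) :
      EStep ⟨s :: σ, b :: β, A⟩ .ra ⟨b :: s :: σ, β, insert (s, b) A⟩
  | re (s σ β A) (h : ∃ x, (x, s) ∈ A) :
      EStep ⟨s :: σ, β, A⟩ .re ⟨σ, β, A⟩

/-- `ETrace c t c'` holds when `t` is a list of (configuration, transition) pairs,
each transition taken in the recorded configuration, leading from `c` to `c'`. -/
inductive ETrace : Config → List (Config × ETrans) → Config → Prop
  | nil (c) : ETrace c [] c
  | cons {c c' cf : Config} {τ : ETrans} {rest} :
      EStep c τ c' → ETrace c' rest cf → ETrace c ((c, τ) :: rest) cf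

/-- Score of an arc-eager transition sequence under parameterization
`(fsh, fra, frl, fre)`: the sum, over the transitions, of the corresponding
scoring function evaluated at the feature pair of the configuration in which
the transition is taken. -/
def escore (n : ℕ) (fsh fra frl fre : Option ℕ → ℕ → ℝ)
    (t : List (Config × ETrans)) : ℝ :=
  (t.map fun e =>
    (match e.2 with
      | ETrans.sh => fsh
      | ETrans.ra => fra
      | ETrans.rl => frl
      | ETrans.re => fre) (stackFeat e.1) (bufFeat n e.1)).sum

/-- Arc-hybrid transition labels. -/
inductive HTrans
  | sh | rr | rl
deriving DecidableEq

/-- Single arc-hybrid transitions between configurations. -/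
inductive HStep : Config → HTrans → Config → Prop
  | sh (σ b β A) : HStep ⟨σ, b :: β, A⟩ .sh ⟨b :: σ, β, A⟩
  | rr (s0 s1 σ β A) :
      HStep ⟨s0 :: s1 :: σ, β, A⟩ .rr ⟨s1 :: σ, β, insert (s1, s0) A⟩
  | rl (s σ b β A) :
      HStep ⟨s :: σ, b :: β, A⟩ .rl ⟨σ, b :: β, insert (b, s) A⟩

/-- `HTrace c t c'` holds when `t` is a list of (configuration, transition) pairs,
each transition taken in the recorded configuration, leading from `c` to `c'`. -/
inductive HTrace : Config → List (Config × HTrans) → Config → Prop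
  | nil (c) : HTrace c [] c
  | cons {c c' cf : Config} {τ : HTrans} {rest} :
      HStep c τ c' → HTrace c' rest cf → HTrace c ((c, τ) :: rest) cf

/-- Score of an arc-hybrid transition sequence under parameterization
`(gsh, grr, grl)`. -/
def hscore (n : ℕ) (gsh grr grl : Option ℕ → ℕ → ℝ)
    (t : List (Config × HTrans)) : ℝ :=
  (t.map fun e =>
    (match e.2 with
      | HTrans.sh => gsh
      | HTrans.rr => grr
      | HTrans.rl => grl) (stackFeat e.1) (bufFeat n e.1)).sum

/-- An entry is a push (sh or ra). -/
def isPush (e : Config × ETrans) : Bool := e.2 == ETrans.sh || e.2 == ETrans.ra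

/-- An entry is a pop (rl or re). -/
def isPop (e : Config × ETrans) : Bool := e.2 == ETrans.rl || e.2 == ETrans.re

/-- An entry pushes index `i` (push transition taken with `i` at the buffer front). -/
def pushesIdx (i : ℕ) (e : Config × ETrans) : Bool :=
  isPush e && e.1.buffer.head? == some i

/-- An entry pops index `i` (pop transition taken with `i` at the stack top). -/
def popsIdx (i : ℕ) (e : Config × ETrans) : Bool :=
  isPop e && e.1.stack.head? == some i

structure EInv (n : ℕ) (c : Config) : Prop where
  p1 : c.stack.Pairwise (· > ·)
  p2 : c.buffer.Pairwise (· < ·)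
  p3 : ∀ s ∈ c.stack, ∀ b ∈ c.buffer, s < b
  p4 : ∀ i, i ≤ n → i ∈ c.stack ∨ i ∈ c.buffer ∨ ∃ h, (h, i) ∈ c.arcs
  p5 : ∀ h m, (h, m) ∈ c.arcs → m ≤ n ∧ m ∉ c.buffer
  p6 : ∀ h, (h, 0) ∈ c.arcs → 0 ∉ c.stack ∧ 0 ∉ c.buffer
  p7 : ∀ h h' m, (h, m) ∈ c.arcs → (h', m) ∈ c.arcs → h = h'
  p8 : ∀ i ∈ c.buffer, i ≤ n
  p9 : ∀ i ∈ c.stack, i ≤ n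

theorem EInv.init (n : ℕ) : EInv n (initConfig n) := by
  constructor <;> simp [initConfig, List.pairwise_lt_range] <;> omega

theorem EInv.step {n : ℕ} {c c' : Config} {τ : ETrans} (h : EStep c τ c')
    (I : EInv n c) : EInv n c' := by
  obtain ⟨p1, p2, p3, p4, p5, p6, p7, p8, p9⟩ := I
  cases h with
  | sh σ b β A =>
    simp only [List.pairwise_cons] at *
    constructor <;> simp only [List.pairwise_cons] <;> grind
  | rl s σ b β A h =>
    simp only [List.pairwise_cons] at *
    constructor <;> simp only [List.pairwise_cons, Finset.mem_insert, Prod.mk.injEq] <;> grind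
  | ra s σ b β A =>
    simp only [List.pairwise_cons] at *
    constructor <;> simp only [List.pairwise_cons, Finset.mem_insert, Prod.mk.injEq] <;> grind
  | re s σ β A h =>
    simp only [List.pairwise_cons] at *
    constructor <;> grind

theorem EInv.trace {n : ℕ} {c cf : Config} {t} (h : ETrace c t cf)
    (I : EInv n c) : EInv n cf := by
  induction h with
  | nil => exact I
  | cons hs _ ih => exact ih (I.step hs)

theorem trace_counts {c cf : Config} {t} (h : ETrace c t cf) :
    t.length = t.countP isPush + t.countP isPop ∧
    t.countP isPush + cf.buffer.length = c.buffer.length ∧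
    t.countP isPop + cf.stack.length + cf.buffer.length = c.stack.length + c.buffer.length ∧
    (∀ i, t.countP (pushesIdx i) + cf.buffer.count i = c.buffer.count i) ∧
    (∀ i, t.countP (popsIdx i) + cf.stack.count i + cf.buffer.count i
      = c.stack.count i + c.buffer.count i) := by
  induction h with
  | nil => simp
  | cons hs _ ih =>
    obtain ⟨h1, h2, h3, h4, h5⟩ := ih
    cases hs <;>
    · simp only [List.countP_cons, List.length_cons, List.count_cons, isPush, isPop, pushesIdx,
        popsIdx] at *
      refine ⟨?_, ?_, ?_, fun i => ?_, fun i => ?_⟩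
      · simp; omega
      · simp; omega
      · simp; omega
      · have := h4 i
        simp at this ⊢; omega
      · have := h5 i
        simp at this ⊢; omega

def HasH (A : Finset (ℕ × ℕ)) (i : ℕ) : Prop := ∃ x, (x, i) ∈ A

def PopBy (t : List (Config × ETrans)) (τ : ETrans) (i : ℕ) : Prop :=
  ∃ e' ∈ t, e'.2 = τ ∧ e'.1.stack.head? = some i

theorem hasH_insert (A : Finset (ℕ × ℕ)) (b s i : ℕ) :
    HasH (insert (b, s) A) i ↔ i = s ∨ HasH A i := by
  simp only [HasH, Finset.mem_insert, Prod.mk.injEq, exists_or]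
  simp

theorem popBy_cons (t : List (Config × ETrans)) (c : Config) (τ' τ : ETrans) (i : ℕ) :
    PopBy ((c, τ') :: t) τ i ↔ (τ' = τ ∧ c.stack.head? = some i) ∨ PopBy t τ i := by
  simp [PopBy]

theorem trace_pops {n : ℕ} {c cf : Config} {t} (h : ETrace c t cf) (I : EInv n c)
    (hf : cf.stack = [0]) :
    (∀ i ∈ c.stack, i ≠ 0 → ¬ HasH c.arcs i → PopBy t ETrans.rl i) ∧
    (∀ i ∈ c.stack, i ≠ 0 → HasH c.arcs i → PopBy t ETrans.re i) := by
  induction h with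
  | nil => simp [hf]
  | cons hs _ ih =>
    obtain ⟨h1, h2⟩ := ih (I.step hs) hf
    clear ih
    have p1 := I.p1
    have p3 := I.p3
    cases hs with
    | rl s σ b β A h =>
      have h' : ¬ HasH A s := fun ⟨x, hx⟩ => h x hx
      clear h I
      simp only [List.mem_cons, hasH_insert, popBy_cons, List.head?_cons, List.pairwise_cons] at *
      constructor <;> grind
    | re s σ β A h =>
      have h' : HasH A s := h
      clear h I
      simp only [List.mem_cons, hasH_insert, popBy_cons, List.head?_cons, List.pairwise_cons] at *
      constructor <;> grind
    | ra s σ b β A =>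
      have p3' : ∀ i ∈ s :: σ, i < b := fun i hi => p3 i hi b (by simp)
      clear I p3
      simp only [List.mem_cons, hasH_insert, popBy_cons, List.head?_cons, List.pairwise_cons] at *
      constructor <;> grind
    | sh =>
      clear I
      simp only [List.mem_cons, hasH_insert, popBy_cons, List.head?_cons, List.pairwise_cons] at *
      constructor <;> grind

theorem trace_main {n : ℕ} {c cf : Config} {t} (h : ETrace c t cf) (I : EInv n c)
    (hf : cf.stack = [0]) :
    (∀ e ∈ t, e.2 = ETrans.sh → ∀ i, e.1.buffer.head? = some i → i ≠ 0 →
        PopBy t ETrans.rl i) ∧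
     (∀ e ∈ t, e.2 = ETrans.rl → ∀ i j, e.1.stack.head? = some i →
        e.1.buffer.head? = some j → i < j) ∧
     (∀ e ∈ t, e.2 = ETrans.ra → ∀ i, e.1.buffer.head? = some i →
        PopBy t ETrans.re i) ∧
     (∀ e ∈ t, e.2 = ETrans.ra → ∀ k i, e.1.stack.head? = some k →
        e.1.buffer.head? = some i → k < i) := by
  induction h with
  | nil => simp
  | cons hs ht ih =>
    obtain ⟨h1, h2, h3, h4⟩ := ih (I.step hs) hf
    obtain ⟨q1, q2⟩ := trace_pops ht (I.step hs) hf
    clear ih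
    have p3 := I.p3
    have p5 : ∀ m, HasH _ m → m ∉ _ := fun m ⟨h, hm⟩ => (I.p5 h m hm).2
    clear I
    cases hs <;>
    · simp only [List.mem_cons, hasH_insert, popBy_cons,
        forall_eq_or_imp, List.head?_cons] at *
      refine ⟨?_, ?_, ?_, ?_⟩ <;> grind

/-- **Structure of complete arc-eager transition sequences.** -/
theorem arc_eager_structure
    (n : ℕ) (hn : 1 ≤ n)
    (t : List (Config × ETrans)) (A : Finset (ℕ × ℕ))
    (ht : ETrace (initConfig n) t ⟨[0], [], A⟩) :
    -- (i) exactly 2n+1 transitions: n+1 pushes and n pops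
    (t.length = 2 * n + 1 ∧ t.countP isPush = n + 1 ∧ t.countP isPop = n) ∧
    -- (ii) the first transition is sh, taken in the initial configuration
    -- (whose buffer front is ROOT, index 0)
    (∃ rest, t = (initConfig n, ETrans.sh) :: rest) ∧
    -- (iii) each index in {0,…,n} is pushed exactly once; each index in
    -- {1,…,n} is popped exactly once; index 0 is never popped
    ((∀ i, i ≤ n → t.countP (pushesIdx i) = 1) ∧
     (∀ i, 1 ≤ i → i ≤ n → t.countP (popsIdx i) = 1) ∧
     t.countP (popsIdx 0) = 0) ∧
    -- (iv) sh-pushed indices other than 0 are popped by rl, receiving a head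
    -- strictly to their right; ra-pushed indices are popped by re, receiving
    -- (at their push) a head strictly to their left
    ((∀ e ∈ t, e.2 = ETrans.sh → ∀ i, e.1.buffer.head? = some i → i ≠ 0 →
        ∃ e' ∈ t, e'.2 = ETrans.rl ∧ e'.1.stack.head? = some i) ∧
     (∀ e ∈ t, e.2 = ETrans.rl → ∀ i j, e.1.stack.head? = some i →
        e.1.buffer.head? = some j → i < j) ∧
     (∀ e ∈ t, e.2 = ETrans.ra → ∀ i, e.1.buffer.head? = some i →
        ∃ e' ∈ t, e'.2 = ETrans.re ∧ e'.1.stack.head? = some i) ∧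
     (∀ e ∈ t, e.2 = ETrans.ra → ∀ k i, e.1.stack.head? = some k →
        e.1.buffer.head? = some i → k < i)) ∧
    -- (v) the final arc set has exactly n arcs and assigns each index in
    -- {1,…,n} exactly one head
    (A.card = n ∧ ∀ m, 1 ≤ m → m ≤ n → ∃! h, (h, m) ∈ A) := by
  have I := EInv.init n
  have If := I.trace ht
  obtain ⟨c1, c2, c3, c4, c5⟩ := trace_counts ht
  simp only [initConfig, List.length_nil, List.length_range, List.length_cons, List.count_nil,
    List.count_cons] at c2 c3 c4 c5
  have hc : ∀ i, i ≤ n → (List.range (n + 1)).count i = 1 := fun i hi =>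
    List.count_eq_one_of_mem List.nodup_range (by simp; omega)
  refine ⟨⟨by omega, by omega, by omega⟩, ?_, ⟨?_, ?_, ?_⟩, trace_main ht I rfl, ?_, ?_⟩
  · generalize hi : initConfig n = c at ht ⊢
    cases ht with
    | nil => simp [initConfig] at hi
    | cons hs _ =>
      cases hs with
      | sh => exact ⟨_, rfl⟩
      | _ => simp [initConfig] at hi
  · intro i hi
    have := c4 i
    rw [hc i hi] at this
    omega
  · intro i h1 hi
    have := c5 i
    rw [hc i hi] at this
    have h0 : (0 == i) = false := by simp; omega
    simp [h0] at this
    omega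
  · have := c5 0
    rw [hc 0 (by omega)] at this
    simp at this
    simpa using this
  · have himg : A.image Prod.snd = Finset.Icc 1 n := by
      ext m
      simp only [Finset.mem_image, Prod.exists, exists_eq_right, Finset.mem_Icc]
      constructor
      · rintro ⟨h, hm⟩
        refine ⟨?_, (If.p5 h m hm).1⟩
        by_contra h0
        obtain rfl : m = 0 := by omega
        exact (If.p6 h hm).1 (by simp)
      · rintro ⟨h1, h2⟩
        have := If.p4 m h2
        simp only [List.mem_singleton, List.not_mem_nil, false_or] at this
        exact this.resolve_left (by omega)
    have hinj : Set.InjOn Prod.snd (A : Set (ℕ × ℕ)) := by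
      rintro ⟨a, b⟩ hab ⟨a', b'⟩ hab' h
      simp only at h
      subst h
      have := If.p7 a a' b hab hab'
      rw [this]
    rw [← Finset.card_image_of_injOn hinj, himg]
    simp
  · intro m h1 h2
    have := If.p4 m h2
    simp only [List.mem_singleton, List.not_mem_nil, false_or] at this
    obtain ⟨h, hm⟩ := this.resolve_left (by omega)
    exact ⟨h, hm, fun y hy => If.p7 _ _ _ hy hm⟩
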